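/- Completeness of useful sharing: if ufnorm(p) (equivalently, if p is a →und-normal program), then the term unf(p) is a fireball, i.e., either a value or an inert term; in other words, Useful Open CbNeed normal forms unfold to Open CbNeed normal terms. -/

import Mathlib

/-! ## Terms of the pure λ-calculus (named syntax) -/

inductive Term : Type
  | var : ℕ → Term
  | lam : ℕ → Term → Term
  | app : Term → Term → Term
  deriving DecidableEq

namespace Term

/-- Size of a term: |x| = 1, |λx.t| = |t|+1, |t u| = |t|+|u|+1. -/
def size : Term → ℕ
  | var _ => 1
  | lam _ t => size t + 1
  | app t u => size t + size u + 1

/-- Free variables of a term. -/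
def fv : Term → Finset ℕ
  | var x => {x}
  | lam x t => (fv t).erase x
  | app t u => fv t ∪ fv u

/-- Meta-level substitution t{x←u}. -/
def subst (x : ℕ) (u : Term) : Term → Term
  | var y => if y = x then u else var y
  | lam y t => if y = x then lam y t else lam y (subst x u t)
  | app t s => app (subst x u t) (subst x u s)

def isVarB : Term → Bool
  | var _ => true
  | _ => false

/-- Values are abstractions (variables are not values). -/
def IsValue (t : Term) : Prop := ∃ x u, t = lam x u

/-- Needed variables of a term. -/
def nv : Term → Finset ℕ
  | var x => {x}
  | lam _ _ => ∅
  | app t u => nv t ∪ nv u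

/-- Applied variables of a term. -/
def anv : Term → Finset ℕ
  | var _ => ∅
  | lam _ _ => ∅
  | app (var x) u => insert x (anv u)
  | app (lam y t) u => anv (lam y t) ∪ anv u
  | app (app t s) u => anv (app t s) ∪ anv u

/-- Unapplied variables of a term. -/
def unv : Term → Finset ℕ
  | var x => {x}
  | lam _ _ => ∅
  | app (var _) u => unv u
  | app (lam y t) u => unv (lam y t) ∪ unv u
  | app (app t s) u => unv (app t s) ∪ unv u

end Term

/-! ## Inert terms and fireballs: i ::= x | i f,  f ::= v | i -/

mutual
  inductive Term.Inert : Term → Prop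
    | var (x : ℕ) : Term.Inert (Term.var x)
    | app {i f : Term} : Term.Inert i → Term.Fireball f → Term.Inert (Term.app i f)
  inductive Term.Fireball : Term → Prop
    | val {x : ℕ} {t : Term} : Term.Fireball (Term.lam x t)
    | inert {i : Term} : Term.Inert i → Term.Fireball i
end

/-- Non-variable inert terms i⁺. -/
def Term.InertPlus (t : Term) : Prop := t.Inert ∧ ∀ x, t ≠ Term.var x

/-! ## β-reduction (closure of the root rule under arbitrary term contexts) -/

inductive Beta : Term → Term → Prop
  | beta (x : ℕ) (t u : Term) : Beta (Term.app (Term.lam x t) u) (Term.subst x u t)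
  | lam {t t' : Term} (x : ℕ) : Beta t t' → Beta (Term.lam x t) (Term.lam x t')
  | appL {t t' : Term} (u : Term) : Beta t t' → Beta (Term.app t u) (Term.app t' u)
  | appR {u u' : Term} (t : Term) : Beta u u' → Beta (Term.app t u) (Term.app t u')

/-- `iterRel R n a b`: an n-step R-reduction sequence from a to b. -/
def iterRel {α : Type} (R : α → α → Prop) : ℕ → α → α → Prop
  | 0 => Eq
  | n + 1 => fun a c => ∃ b, R a b ∧ iterRel R n b c

/-! ## Environments and programs -/

/-- Environments are finite lists of explicit substitutions, written
left-to-right, i.e. E[x←t] is `E ++ [(x, t)]`. -/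
abbrev Env := List (ℕ × Term)

def Env.dom (E : Env) : Finset ℕ := (E.map Prod.fst).toFinset

/-- Content of the leftmost explicit substitution on x. -/
def Env.lookupES : Env → ℕ → Option Term
  | [], _ => none
  | (y, t) :: E, x => if y = x then some t else Env.lookupES E x

structure Program where
  tm : Term
  env : Env

/-- p@[x←u] : appending an explicit substitution at the end of the environment. -/
def Program.appES (p : Program) (x : ℕ) (u : Term) : Program := ⟨p.tm, p.env ++ [(x, u)]⟩

/-- One step of the needed-variables computation along an explicit substitution. -/
def nvStep (V : Finset ℕ) (e : ℕ × Term) : Finset ℕ :=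
  if e.1 ∈ V then (V.erase e.1) ∪ Term.nv e.2 else V

/-- Needed variables of a program. -/
def Program.nv (p : Program) : Finset ℕ := p.env.foldl nvStep p.tm.nv

/-- One step of the applied-variables computation (carrying needed variables). -/
def anvStep : Finset ℕ × Finset ℕ → ℕ × Term → Finset ℕ × Finset ℕ
  | (N, A), (x, u) =>
    (nvStep N (x, u),
      if x ∈ N then
        match u with
        | Term.var y => if x ∈ A then (A.erase x) ∪ {y} else A.erase x
        | _ => (A.erase x) ∪ Term.anv u
      else A)

/-- Applied variables of a program. -/
def Program.anv (p : Program) : Finset ℕ :=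
  (p.env.foldl anvStep (p.tm.nv, p.tm.anv)).2

/-- One step of the unapplied-variables computation (carrying needed variables). -/
def unvStep : Finset ℕ × Finset ℕ → ℕ × Term → Finset ℕ × Finset ℕ
  | (N, U), (x, u) =>
    (nvStep N (x, u),
      if x ∈ U ∨ (x ∈ N ∧ u.isVarB = false) then (U.erase x) ∪ Term.unv u else U)

/-- Unapplied variables of a program. -/
def Program.unv (p : Program) : Finset ℕ :=
  (p.env.foldl unvStep (p.tm.nv, p.tm.unv)).2

/-- Unfolding of a program into a term: unf(t, ε) = t, unf(t, E[x←u]) = unf(t, E){x←u}. -/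
def Program.unf (p : Program) : Term :=
  p.env.foldl (fun s e => Term.subst e.1 e.2 s) p.tm

/-! ## Term contexts H ::= ⟨·⟩ | H t | i H (i inert, enforced by WF) -/

inductive HCtx : Type
  | hole : HCtx
  | appL : HCtx → Term → HCtx
  | appR : Term → HCtx → HCtx

namespace HCtx

/-- Well-formedness: in i H, the left part i must be an inert term. -/
def WF : HCtx → Prop
  | hole => True
  | appL H _ => WF H
  | appR i H => Term.Inert i ∧ WF H

def plug : HCtx → Term → Term
  | hole, t => t
  | appL H u, t => Term.app (plug H t) u
  | appR i H, t => Term.app i (plug H t)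

def nv : HCtx → Finset ℕ
  | hole => ∅
  | appL H _ => nv H
  | appR i H => Term.nv i ∪ nv H

def anv : HCtx → Finset ℕ
  | hole => ∅
  | appL H _ => anv H
  | appR i H => Term.anv i ∪ anv H

def unv : HCtx → Finset ℕ
  | hole => ∅
  | appL H _ => unv H
  | appR i H => Term.unv i ∪ unv H

end HCtx

/-- Applicative term contexts H@ ::= ⟨·⟩ t | H@ t | i H@. -/
inductive HCtx.IsApp : HCtx → Prop
  | base (t : Term) : HCtx.IsApp (HCtx.appL HCtx.hole t)
  | appL {H : HCtx} (t : Term) : HCtx.IsApp H → HCtx.IsApp (HCtx.appL H t)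
  | appR {H : HCtx} {i : Term} : Term.Inert i → HCtx.IsApp H → HCtx.IsApp (HCtx.appR i H)

/-! ## Program contexts: hole in the term part (tc) or inside an ES (ec) -/

inductive PCtx : Type
  | tc : HCtx → Env → PCtx
  | ec : Term → Env → ℕ → HCtx → Env → PCtx

namespace PCtx

/-- P@[x←u] : appending an explicit substitution at the end of the environment of P. -/
def appES : PCtx → ℕ → Term → PCtx
  | tc H E, x, u => tc H (E ++ [(x, u)])
  | ec t E1 y H E2, x, u => ec t E1 y H (E2 ++ [(x, u)])

/-- Plugging a term into a program context. -/
def plugT : PCtx → Term → Program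
  | tc H E, t => ⟨H.plug t, E⟩
  | ec u E1 x H E2, t => ⟨u, E1 ++ (x, H.plug t) :: E2⟩

/-- Plugging a program into a program context: the plugged environment is appended
right after the position of the hole. -/
def plugP : PCtx → Program → Program
  | tc H E, q => ⟨H.plug q.tm, q.env ++ E⟩
  | ec u E1 x H E2, q => ⟨u, E1 ++ (x, H.plug q.tm) :: (q.env ++ E2)⟩

/-- Variables bound by the environment of P. -/
def dom : PCtx → Finset ℕ
  | tc _ E => Env.dom E
  | ec _ E1 y _ E2 => insert y (Env.dom E1 ∪ Env.dom E2)

/-- P(x): content of the leftmost explicit substitution on x occurring after the hole. -/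
def lookup : PCtx → ℕ → Option Term
  | tc _ E, x => Env.lookupES E x
  | ec _ _ _ _ E2, x => Env.lookupES E2 x

/-- (P⟨x⟩)@[x←H] : plug the variable x in the hole of P and append the ES [x←H],
whose content H now contains the hole. -/
def hered (P : PCtx) (x : ℕ) (H : HCtx) : PCtx :=
  ec (P.plugT (Term.var x)).tm (P.plugT (Term.var x)).env x H []

end PCtx

/-! ## Open CbNeed evaluation contexts P ∈ E_V -/

inductive OEC : PCtx → Finset ℕ → Prop
  | ax {H : HCtx} : H.WF → OEC (PCtx.tc H []) H.nv
  | gc {P : PCtx} {V : Finset ℕ} {x : ℕ} (t : Term) :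
      OEC P V → x ∉ V → x ∉ P.dom → OEC (P.appES x t) V
  | inert {P : PCtx} {V : Finset ℕ} {x : ℕ} {i : Term} :
      OEC P V → x ∈ V → Term.Inert i → x ∉ P.dom →
      OEC (P.appES x i) ((V.erase x) ∪ i.nv)
  | her {P : PCtx} {V : Finset ℕ} {x : ℕ} {H : HCtx} :
      OEC P V → x ∉ V → x ∉ P.dom → H.WF →
      OEC (P.hered x H) (V ∪ H.nv)

/-! ## Open CbNeed reduction -/

inductive StepOM : Program → Program → Prop
  | mk {P : PCtx} {V : Finset ℕ} {x : ℕ} {t u : Term} :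
      OEC P V →
      StepOM (P.plugT (Term.app (Term.lam x t) u)) (P.plugP ⟨t, [(x, u)]⟩)

inductive StepOE : Program → Program → Prop
  | mk {P : PCtx} {V : Finset ℕ} {x : ℕ} {v : Term} :
      OEC P V → P.lookup x = some v → v.IsValue →
      StepOE (P.plugT (Term.var x)) (P.plugT v)

def StepOnd (p q : Program) : Prop := StepOM p q ∨ StepOE p q

/-! ## Open CbNeed normal programs -/

inductive PInert : Program → Prop
  | ax {i : Term} : i.Inert → PInert ⟨i, []⟩
  | inert {p : Program} {x : ℕ} {i : Term} :
      PInert p → x ∈ p.nv → i.Inert → PInert (p.appES x i)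
  | gc {p : Program} {x : ℕ} (t : Term) :
      PInert p → x ∉ p.nv → PInert (p.appES x t)

inductive PAbs : Program → Prop
  | ax {v : Term} : v.IsValue → PAbs ⟨v, []⟩
  | gc {p : Program} {x : ℕ} (t : Term) : PAbs p → PAbs (p.appES x t)

def ONorm (p : Program) : Prop := PInert p ∨ PAbs p

/-! ## Useful Open CbNeed: multiplicative and exponential evaluation contexts -/

def upd (S : Finset ℕ) (x y : ℕ) : Finset ℕ := if x ∈ S then (S.erase x) ∪ {y} else S

inductive MEC : PCtx → Finset ℕ → Finset ℕ → Prop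
  | ax {H : HCtx} : H.WF → MEC (PCtx.tc H []) H.unv H.anv
  | var {P : PCtx} {U A : Finset ℕ} {x y : ℕ} :
      MEC P U A → x ∈ U ∪ A → x ∉ P.dom →
      MEC (P.appES x (Term.var y)) (upd U x y) (upd A x y)
  | gc {P : PCtx} {U A : Finset ℕ} {x : ℕ} (t : Term) :
      MEC P U A → x ∉ U ∪ A → x ∉ P.dom → MEC (P.appES x t) U A
  | inert {P : PCtx} {U A : Finset ℕ} {x : ℕ} {i : Term} :
      MEC P U A → x ∈ U ∪ A → i.InertPlus → x ∉ P.dom →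
      MEC (P.appES x i) ((U.erase x) ∪ i.unv) ((A.erase x) ∪ i.anv)
  | val {P : PCtx} {U A : Finset ℕ} {x : ℕ} {v : Term} :
      MEC P U A → x ∈ U → x ∉ A → v.IsValue → x ∉ P.dom →
      MEC (P.appES x v) (U.erase x) A
  | her {P : PCtx} {U A : Finset ℕ} {x : ℕ} {H : HCtx} :
      MEC P U A → x ∉ U ∪ A → x ∉ P.dom → H.WF →
      MEC (P.hered x H) (U ∪ H.unv) (A ∪ H.anv)

/-- Exponential evaluation contexts P ∈ E@_{U,A}; the last (natural number) index
counts the number of applications of rule (e_NA) in the derivation. -/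
inductive EEC : PCtx → Finset ℕ → Finset ℕ → ℕ → Prop
  | ax1 {H : HCtx} : H.IsApp → EEC (PCtx.tc H []) H.unv H.anv 0
  | ax2 {P : PCtx} {U A : Finset ℕ} {x : ℕ} {H : HCtx} :
      MEC P U A → x ∉ U ∪ A → x ∉ P.dom → H.IsApp →
      EEC (P.hered x H) ((U.erase x) ∪ H.unv) (A ∪ H.anv) 0
  | var {P : PCtx} {U A : Finset ℕ} {k : ℕ} {x y : ℕ} :
      EEC P U A k → x ∈ U ∪ A → x ∉ P.dom →
      EEC (P.appES x (Term.var y)) (upd U x y) (upd A x y) k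
  | inert {P : PCtx} {U A : Finset ℕ} {k : ℕ} {x : ℕ} {i : Term} :
      EEC P U A k → x ∈ U ∪ A → i.InertPlus → x ∉ P.dom →
      EEC (P.appES x i) ((U.erase x) ∪ i.unv) ((A.erase x) ∪ i.anv) k
  | gc {P : PCtx} {U A : Finset ℕ} {k : ℕ} {x : ℕ} (t : Term) :
      EEC P U A k → x ∉ U ∪ A → x ∉ P.dom → EEC (P.appES x t) U A k
  | val {P : PCtx} {U A : Finset ℕ} {k : ℕ} {x : ℕ} {v : Term} :
      EEC P U A k → x ∈ U → x ∉ A → v.IsValue → x ∉ P.dom →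
      EEC (P.appES x v) (U.erase x) A k
  | na {P : PCtx} {U A : Finset ℕ} {k : ℕ} {x : ℕ} :
      EEC P U A k → x ∉ A → x ∉ P.dom →
      EEC (P.hered x HCtx.hole) (U.erase x) A (k + 1)

/-! ## Useful Open CbNeed reduction -/

inductive StepUM : Program → Program → Prop
  | mk {P : PCtx} {U A : Finset ℕ} {x : ℕ} {t u : Term} :
      MEC P U A →
      StepUM (P.plugT (Term.app (Term.lam x t) u)) (P.plugP ⟨t, [(x, u)]⟩)

inductive StepUE : Program → Program → Prop
  | mk {P : PCtx} {U A : Finset ℕ} {k : ℕ} {x : ℕ} {v : Term} :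
      EEC P U A k → P.lookup x = some v → v.IsValue →
      StepUE (P.plugT (Term.var x)) (P.plugT v)

def StepUnd (p q : Program) : Prop := StepUM p q ∨ StepUE p q

/-- Useful multiplicative steps whose evaluation context lies in Em_{U,A}. -/
def StepUMat (U A : Finset ℕ) (p q : Program) : Prop :=
  ∃ (P : PCtx) (x : ℕ) (t u : Term), MEC P U A ∧
    p = P.plugT (Term.app (Term.lam x t) u) ∧ q = P.plugP ⟨t, [(x, u)]⟩

/-- Useful exponential steps whose evaluation context lies in E@_{U,A}. -/
def StepUEat (U A : Finset ℕ) (p q : Program) : Prop :=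
  ∃ (P : PCtx) (k : ℕ) (x : ℕ) (v : Term), EEC P U A k ∧
    P.lookup x = some v ∧ v.IsValue ∧
    p = P.plugT (Term.var x) ∧ q = P.plugT v

/-! ## Useful normal-form predicates -/

inductive GenVar : ℕ → Program → Prop
  | ax (x : ℕ) : GenVar x ⟨Term.var x, []⟩
  | her {x : ℕ} {p : Program} (y : ℕ) : GenVar x p → GenVar y (p.appES x (Term.var y))
  | gc {x z : ℕ} {p : Program} (t : Term) : GenVar x p → z ≠ x → GenVar x (p.appES z t)

inductive UfAbs : Program → Prop
  | ax {v : Term} : v.IsValue → UfAbs ⟨v, []⟩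
  | gv {p : Program} {x : ℕ} {v : Term} : GenVar x p → v.IsValue → UfAbs (p.appES x v)
  | gc {p : Program} {x : ℕ} (t : Term) : UfAbs p → UfAbs (p.appES x t)

inductive UfInert : Program → Prop
  | ax {i : Term} : i.InertPlus → UfInert ⟨i, []⟩
  | gv {p : Program} {x : ℕ} {i : Term} : GenVar x p → i.InertPlus → UfInert (p.appES x i)
  | inert {p : Program} {x : ℕ} {i : Term} :
      UfInert p → x ∈ p.nv → i.Inert → UfInert (p.appES x i)
  | useless {p : Program} {x : ℕ} {v : Term} :
      UfInert p → x ∈ p.unv → x ∉ p.anv → v.IsValue → UfInert (p.appES x v)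
  | gc {p : Program} {x : ℕ} (t : Term) : UfInert p → x ∉ p.nv → UfInert (p.appES x t)

def UfNorm (p : Program) : Prop := UfInert p ∨ UfAbs p ∨ ∃ x, GenVar x p

/-! ## The size-exploding family -/

/-- t₁ := λx.λy. y x x  (x := 0, y := 1). -/
def t1 : Term := Term.lam 0 (Term.lam 1 (Term.app (Term.app (Term.var 1) (Term.var 0)) (Term.var 0)))

/-- λy. y x x. -/
def tbody : Term := Term.lam 1 (Term.app (Term.app (Term.var 1) (Term.var 0)) (Term.var 0))

/-- The family t_n (values for n ≥ 1; tfam 0 is a dummy). -/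
def tfam : ℕ → Term
  | 0 => t1
  | 1 => t1
  | n + 2 => Term.lam 0 (Term.app (tfam (n + 1)) tbody)

/-- I := λz.z. -/
def Idt : Term := Term.lam 2 (Term.var 2)

/-- The family u_n : u₀ = I, u_{n+1} = λy. y u_n u_n. -/
def ufam : ℕ → Term
  | 0 => Idt
  | n + 1 => Term.lam 1 (Term.app (Term.app (Term.var 1) (ufam n)) (ufam n))

/-! Unfolding preserves the needed and the applied variables of a program, so the side conditions
of a useful normal form, which are read off the program, are facts about its unfolding. (These sets
ignore variables under abstractions, so variable capture cannot affect them.) A substitution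
`{x←u}` keeps a non-variable inert term inert as soon as `u` is a fireball whenever `x` is needed,
and inert whenever `x` is applied: only an abstraction substituted for an applied variable can
create a β-redex. Each rule building useful inert programs meets this condition. -/

namespace Term

variable {x z : ℕ} {u : Term}

theorem mem_anv_app {a b : Term} :
    z ∈ (app a b).anv ↔ a = var z ∨ z ∈ a.anv ∨ z ∈ b.anv := by
  cases a <;> simp [anv, eq_comm]

theorem anv_subset_nv (t : Term) : t.anv ⊆ t.nv := by
  intro z
  induction t with
  | var y => simp [anv]
  | lam y t => simp [anv]
  | app a b iha ihb =>
    have head_needed : a = var z → z ∈ a.nv := by rintro rfl; simp [nv]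
    simp only [mem_anv_app, nv, Finset.mem_union]
    tauto

theorem subst_var_self (x : ℕ) (u : Term) : subst x u (var x) = u :=
  if_pos rfl

theorem subst_var_of_ne {y : ℕ} (h : y ≠ x) : subst x u (var y) = var y :=
  if_neg h

theorem IsValue.subst {t : Term} (ht : t.IsValue) : (Term.subst x u t).IsValue := by
  obtain ⟨y, s, rfl⟩ := ht
  by_cases h : y = x <;> simp [Term.subst, h, IsValue]

theorem subst_eq_var_iff {t : Term} :
    subst x u t = var z ↔ t = var z ∧ z ≠ x ∨ t = var x ∧ u = var z := by
  cases t with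
  | var y => grind [subst]
  | lam y t => grind [subst]
  | app a b => simp [subst]

theorem mem_nv_subst_iff {t : Term} :
    z ∈ (subst x u t).nv ↔ z ∈ t.nv ∧ z ≠ x ∨ x ∈ t.nv ∧ z ∈ u.nv := by
  induction t with
  | var y => grind [subst, nv]
  | lam y t => grind [subst, nv]
  | app a b iha ihb =>
    simp only [subst, nv, Finset.mem_union, iha, ihb]
    tauto

theorem mem_anv_subst_iff {t : Term} :
    z ∈ (subst x u t).anv ↔
      z ∈ t.anv ∧ z ≠ x ∨ x ∈ t.nv ∧ z ∈ u.anv ∨ x ∈ t.anv ∧ u = var z := by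
  induction t with
  | var y => grind [subst, nv, anv]
  | lam y t => grind [subst, nv, anv]
  | app a b iha ihb =>
    grind [subst, nv, mem_anv_app, subst_eq_var_iff]

theorem nvStep_nv (t : Term) (e : ℕ × Term) : nvStep t.nv e = (subst e.1 e.2 t).nv := by
  ext z
  grind [nvStep, mem_nv_subst_iff]

theorem anvStep_nv_anv (t : Term) (e : ℕ × Term) :
    anvStep (t.nv, t.anv) e = ((subst e.1 e.2 t).nv, (subst e.1 e.2 t).anv) := by
  obtain ⟨x, u⟩ := e
  refine Prod.ext (nvStep_nv t (x, u)) ?_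
  ext z
  have applied_needed : x ∈ t.anv → x ∈ t.nv := (anv_subset_nv t ·)
  cases u <;> grind [anvStep, mem_anv_subst_iff, anv]

theorem IsValue.fireball {t : Term} (ht : t.IsValue) : t.Fireball := by
  obtain ⟨y, s, rfl⟩ := ht
  exact .val

mutual

-- The case `t = var x` is separate: `x ∉ anv x`, although `x` becomes applied in `x f`.
theorem Inert.subst {t : Term} (hi : t.Inert) (hnv : x ∈ t.nv → u.Fireball)
    (hanv : x ∈ t.anv → u.Inert) (hvar : t = var x → u.Inert) : (Term.subst x u t).Inert := by
  cases hi with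
  | var y =>
    by_cases h : y = x
    · subst h
      simpa only [subst_var_self] using hvar rfl
    · simpa only [subst_var_of_ne h] using Inert.var y
  | app hi hf =>
    exact .app
      (hi.subst (fun h => hnv (Finset.mem_union_left _ h))
        (fun h => hanv (mem_anv_app.mpr (.inr (.inl h))))
        (fun h => hanv (mem_anv_app.mpr (.inl h))))
      (hf.subst (fun h => hnv (Finset.mem_union_right _ h))
        (fun h => hanv (mem_anv_app.mpr (.inr (.inr h)))))

theorem Fireball.subst {t : Term} (hf : t.Fireball) (hnv : x ∈ t.nv → u.Fireball)
    (hanv : x ∈ t.anv → u.Inert) : (Term.subst x u t).Fireball := by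
  cases hf with
  | val => exact (IsValue.subst ⟨_, _, rfl⟩).fireball
  | inert hi =>
    by_cases h : t = var x
    · subst h
      simpa only [subst_var_self] using hnv (by simp [nv])
    · exact .inert (hi.subst hnv hanv (fun h' => absurd h' h))

end

theorem InertPlus.subst {t : Term} (ht : t.InertPlus) (hnv : x ∈ t.nv → u.Fireball)
    (hanv : x ∈ t.anv → u.Inert) : (Term.subst x u t).InertPlus := by
  refine ⟨ht.1.subst hnv hanv fun h => absurd h (ht.2 x), fun z hz => ?_⟩
  rcases subst_eq_var_iff.mp hz with ⟨h, _⟩ | ⟨h, _⟩ <;> exact ht.2 _ h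

end Term

namespace Program

theorem unf_appES (p : Program) (x : ℕ) (u : Term) :
    (p.appES x u).unf = Term.subst x u p.unf :=
  List.foldl_append

theorem nv_unf (p : Program) : p.unf.nv = p.nv :=
  (List.foldl_hom Term.nv Term.nvStep_nv).symm

theorem anv_unf (p : Program) : p.unf.anv = p.anv :=
  congrArg Prod.snd (List.foldl_hom (fun t : Term => (t.nv, t.anv)) Term.anvStep_nv_anv).symm

end Program

theorem GenVar.unf_eq_var {x : ℕ} {p : Program} (hp : GenVar x p) : p.unf = Term.var x := by
  induction hp with
  | ax x => rfl
  | her y _ ih => rw [Program.unf_appES, ih, Term.subst_var_self]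
  | gc t _ hne ih => rw [Program.unf_appES, ih, Term.subst_var_of_ne hne.symm]

theorem GenVar.unf_appES {x : ℕ} {p : Program} (hp : GenVar x p) (u : Term) :
    (p.appES x u).unf = u := by
  rw [Program.unf_appES, hp.unf_eq_var, Term.subst_var_self]

theorem UfAbs.isValue_unf {p : Program} (hp : UfAbs p) : p.unf.IsValue := by
  induction hp with
  | ax hv => exact hv
  | gv hx hv => rwa [hx.unf_appES]
  | gc t _ ih =>
    rw [Program.unf_appES]
    exact ih.subst

theorem UfInert.inertPlus_unf {p : Program} (hp : UfInert p) : p.unf.InertPlus := by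
  induction hp with
  | ax hi => exact hi
  | gv hx hi => rwa [hx.unf_appES]
  | inert _ _ hi ih =>
    rw [Program.unf_appES]
    exact ih.subst (fun _ => .inert hi) (fun _ => hi)
  | @useless p x _ _ _ hanv hv ih =>
    have not_applied : x ∉ p.unf.anv := p.anv_unf ▸ hanv
    rw [Program.unf_appES]
    exact ih.subst (fun _ => hv.fireball) (fun h => absurd h not_applied)
  | @gc p x _ _ hnv ih =>
    have not_needed : x ∉ p.unf.nv := p.nv_unf ▸ hnv
    rw [Program.unf_appES]
    exact ih.subst (fun h => absurd h not_needed)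
      (fun h => absurd (Term.anv_subset_nv _ h) not_needed)

/-- completeness of useful sharing: useful normal forms unfold to
fireballs, i.e. to Open CbNeed normal terms. -/
theorem ufnorm_unfolds_to_fireball :
    ∀ p : Program, UfNorm p → Term.Fireball p.unf := by
  rintro p (hp | hp | ⟨x, hp⟩)
  · exact .inert hp.inertPlus_unf.1
  · exact hp.isValue_unf.fireball
  · rw [hp.unf_eq_var]
    exact .inert (.var x)
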